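/- The kernel of the restriction to V_n' of the quotient homomorphism U_n → PU_n = U_n/Z(U_n) is the cyclic subgroup of V_n' generated by the scalar matrix ζ·I, which has order n. In other words, there is a short exact sequence 1 → ℤ/n → V_n' → V_n → 1, where V_n is the image of V_n' in PU_n. -/

import Mathlib

/-!
The matrices satisfy `β' α' = ζ α' β'` and `α' ^ n = β' ^ n = 1`. So the commutator of `β'` and
`α'` is the scalar matrix `ζ·I`, which is central of order `n`, and every element of `V_n'` has the
form `ζ ^ k α' ^ i β' ^ j`. Commuting `α' ^ i` past `β'` produces the scalar `ζ ^ i`, and commuting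
`β' ^ j` past `α'` produces `ζ ^ (-j)`; an element that commutes with both generators therefore has
`n ∣ i` and `n ∣ j`, and is the scalar `ζ ^ k`.
-/

open Matrix Complex

/-- `ζ = exp(2πi/n)`. -/
noncomputable def zetaC (n : ℕ) : ℂ := Complex.exp (2 * Real.pi * Complex.I / n)

/-- The cyclic permutation matrix `α'`, with `α'_{ij} = 1` iff `i ≡ j + 1 (mod n)`. -/
noncomputable def alphaM (n : ℕ) : Matrix (Fin n) (Fin n) ℂ :=
  fun i j => if (i : ℕ) = ((j : ℕ) + 1) % n then 1 else 0

/-- The diagonal matrix `β' = diag(ζ, ζ², …, ζ^{n−1}, 1)`. -/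
noncomputable def betaM (n : ℕ) : Matrix (Fin n) (Fin n) ℂ :=
  Matrix.diagonal fun i => zetaC n ^ ((i : ℕ) + 1)

/-- `α'` as an element of the unitary group. -/
noncomputable def aU (n : ℕ) (hA : alphaM n ∈ Matrix.unitaryGroup (Fin n) ℂ) :
    Matrix.unitaryGroup (Fin n) ℂ := ⟨alphaM n, hA⟩

/-- `β'` as an element of the unitary group. -/
noncomputable def bU (n : ℕ) (hB : betaM n ∈ Matrix.unitaryGroup (Fin n) ℂ) :
    Matrix.unitaryGroup (Fin n) ℂ := ⟨betaM n, hB⟩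

/-- The scalar matrix `ζ·I` as an element of the unitary group. -/
noncomputable def sU (n : ℕ)
    (hS : zetaC n • (1 : Matrix (Fin n) (Fin n) ℂ) ∈ Matrix.unitaryGroup (Fin n) ℂ) :
    Matrix.unitaryGroup (Fin n) ℂ := ⟨zetaC n • (1 : Matrix (Fin n) (Fin n) ℂ), hS⟩

/-- `V_n'`, the subgroup of `U_n` generated by `α'` and `β'`. -/
noncomputable def Vgrp (n : ℕ) (hA : alphaM n ∈ Matrix.unitaryGroup (Fin n) ℂ)
    (hB : betaM n ∈ Matrix.unitaryGroup (Fin n) ℂ) :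
    Subgroup (Matrix.unitaryGroup (Fin n) ℂ) :=
  Subgroup.closure {aU n hA, bU n hB}

/-- `W_n`, the subgroup of `U_n` generated by `β'` and the scalar matrix `ζ·I`. -/
noncomputable def Wgrp (n : ℕ) (hB : betaM n ∈ Matrix.unitaryGroup (Fin n) ℂ)
    (hS : zetaC n • (1 : Matrix (Fin n) (Fin n) ℂ) ∈ Matrix.unitaryGroup (Fin n) ℂ) :
    Subgroup (Matrix.unitaryGroup (Fin n) ℂ) :=
  Subgroup.closure {bU n hB, sU n hS}

lemma zpow_eq_one_of_orderOf_dvd {G H : Type*} [Group G] [Group H] {x : G} {y : H}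
    (h : orderOf x ∣ orderOf y) {m : ℤ} (hm : y ^ m = 1) : x ^ m = 1 :=
  orderOf_dvd_iff_zpow_eq_one.mp <|
    (Int.natCast_dvd_natCast.mpr h).trans (orderOf_dvd_iff_zpow_eq_one.mpr hm)

section Commutator

open scoped commutatorElement

variable {G : Type*} [Group G] {x y : G}

lemma commutatorElement_mul_mul (x y : G) : ⁅x, y⁆ * (y * x) = x * y := by
  group

lemma commutatorElement_zpow_right (hy : Commute ⁅x, y⁆ y) (n : ℤ) : ⁅x, y ^ n⁆ = ⁅x, y⁆ ^ n := by
  have h : SemiconjBy x y (⁅x, y⁆ * y) := by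
    rw [SemiconjBy, mul_assoc, commutatorElement_mul_mul]
  rw [commutatorElement_def, (h.zpow_right n).eq, hy.mul_zpow, mul_inv_cancel_right,
    mul_inv_cancel_right]

lemma commutatorElement_zpow_left (hx : Commute ⁅x, y⁆ x) (m : ℤ) : ⁅x ^ m, y⁆ = ⁅x, y⁆ ^ m := by
  rw [← commutatorElement_inv y x] at hx
  rw [← commutatorElement_inv, commutatorElement_zpow_right (Commute.inv_left_iff.mp hx),
    ← _root_.inv_zpow, commutatorElement_inv]

lemma commutatorElement_zpow_zpow (hx : Commute ⁅x, y⁆ x) (hy : Commute ⁅x, y⁆ y) (m n : ℤ) :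
    ⁅x ^ m, y ^ n⁆ = ⁅x, y⁆ ^ (m * n) := by
  have hym : Commute ⁅x ^ m, y⁆ y := by
    rw [commutatorElement_zpow_left hx]
    exact hy.zpow_left m
  rw [commutatorElement_zpow_right hym, commutatorElement_zpow_left hx, _root_.zpow_mul]

lemma zpow_mul_zpow_eq_commutatorElement_zpow_mul (hx : Commute ⁅x, y⁆ x) (hy : Commute ⁅x, y⁆ y)
    (m n : ℤ) : x ^ m * y ^ n = ⁅x, y⁆ ^ (m * n) * (y ^ n * x ^ m) := by
  rw [← commutatorElement_zpow_zpow hx hy, commutatorElement_mul_mul]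

lemma commutatorElement_zpow_mul_zpow_mul_zpow_mul (hx : Commute ⁅x, y⁆ x) (hy : Commute ⁅x, y⁆ y)
    (k i j k' i' j' : ℤ) :
    ⁅x, y⁆ ^ k * (y ^ i * x ^ j) * (⁅x, y⁆ ^ k' * (y ^ i' * x ^ j')) =
      ⁅x, y⁆ ^ (k + k' + j * i') * (y ^ (i + i') * x ^ (j + j')) := by
  have central (m : ℤ) : Commute (⁅x, y⁆ ^ m) (y ^ i * x ^ j) :=
    (hy.zpow_zpow m i).mul_right (hx.zpow_zpow m j)
  calc ⁅x, y⁆ ^ k * (y ^ i * x ^ j) * (⁅x, y⁆ ^ k' * (y ^ i' * x ^ j'))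
      = ⁅x, y⁆ ^ k * ((y ^ i * x ^ j) * ⁅x, y⁆ ^ k') * (y ^ i' * x ^ j') := by
        simp only [mul_assoc]
    _ = ⁅x, y⁆ ^ (k + k') * y ^ i * (x ^ j * y ^ i') * x ^ j' := by
        rw [← (central k').eq, _root_.zpow_add]
        simp only [mul_assoc]
    _ = ⁅x, y⁆ ^ (k + k') * (y ^ i * ⁅x, y⁆ ^ (j * i')) * (y ^ i' * x ^ (j + j')) := by
        rw [zpow_mul_zpow_eq_commutatorElement_zpow_mul hx hy, _root_.zpow_add x]
        simp only [mul_assoc]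
    _ = ⁅x, y⁆ ^ (k + k' + j * i') * (y ^ (i + i') * x ^ (j + j')) := by
        rw [← (hy.zpow_zpow (j * i') i).eq, _root_.zpow_add _ (k + k'), _root_.zpow_add y]
        simp only [mul_assoc]

lemma exists_eq_commutatorElement_zpow_mul_of_mem_closure_pair (hx : Commute ⁅x, y⁆ x)
    (hy : Commute ⁅x, y⁆ y) {v : G} (hv : v ∈ Subgroup.closure {x, y}) :
    ∃ k i j : ℤ, v = ⁅x, y⁆ ^ k * (y ^ i * x ^ j) := by
  have normalForm_mul := commutatorElement_zpow_mul_zpow_mul_zpow_mul hx hy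
  induction hv using Subgroup.closure_induction with
  | mem v hv =>
    rcases hv with rfl | rfl
    · exact ⟨0, 0, 1, by simp⟩
    · exact ⟨0, 1, 0, by simp⟩
  | one => exact ⟨0, 0, 0, by simp⟩
  | mul v w _ _ ihv ihw =>
    obtain ⟨k, i, j, rfl⟩ := ihv
    obtain ⟨k', i', j', rfl⟩ := ihw
    exact ⟨_, _, _, normalForm_mul k i j k' i' j'⟩
  | inv v _ ih =>
    obtain ⟨k, i, j, rfl⟩ := ih
    refine ⟨-k + j * i, -i, -j, inv_eq_of_mul_eq_one_right ?_⟩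
    rw [normalForm_mul]
    simp

lemma commutatorElement_mem_closure_pair (x y : G) : ⁅x, y⁆ ∈ Subgroup.closure {x, y} := by
  have hx : x ∈ Subgroup.closure {x, y} := Subgroup.mem_closure_of_mem (by simp)
  have hy : y ∈ Subgroup.closure {x, y} := Subgroup.mem_closure_of_mem (by simp)
  exact mul_mem (mul_mem (mul_mem hx hy) (inv_mem hx)) (inv_mem hy)

lemma mem_zpowers_commutatorElement_of_commute (hx : Commute ⁅x, y⁆ x) (hy : Commute ⁅x, y⁆ y)
    (hox : orderOf x ∣ orderOf ⁅x, y⁆) (hoy : orderOf y ∣ orderOf ⁅x, y⁆) {v : G}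
    (hv : v ∈ Subgroup.closure {x, y}) (hxv : Commute x v) (hyv : Commute y v) :
    v ∈ Subgroup.zpowers ⁅x, y⁆ := by
  obtain ⟨k, i, j, rfl⟩ := exists_eq_commutatorElement_zpow_mul_of_mem_closure_pair hx hy hv
  have hi : y ^ i = 1 := by
    have hcomm : Commute x (y ^ i) := by
      simpa using ((hx.symm.zpow_right (-k)).mul_right hxv).mul_right (Commute.self_zpow x (-j))
    refine zpow_eq_one_of_orderOf_dvd hoy ?_
    rw [← commutatorElement_zpow_right hy, hcomm.commutator_eq]
  have hj : x ^ j = 1 := by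
    have hcomm : Commute (x ^ j) y := by
      simpa [hi] using ((hy.symm.zpow_right (-k)).mul_right hyv).symm
    refine zpow_eq_one_of_orderOf_dvd hox ?_
    rw [← commutatorElement_zpow_left hx, hcomm.commutator_eq]
  exact ⟨k, by simp [hi, hj]⟩

theorem center_inf_closure_pair_eq_zpowers_commutatorElement
    (hc : ⁅x, y⁆ ∈ Subgroup.center G) (hox : orderOf x ∣ orderOf ⁅x, y⁆)
    (hoy : orderOf y ∣ orderOf ⁅x, y⁆) :
    Subgroup.center G ⊓ Subgroup.closure {x, y} = Subgroup.zpowers ⁅x, y⁆ := by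
  have central {z : G} (hz : z ∈ Subgroup.center G) (g : G) : Commute g z :=
    Subgroup.mem_center_iff.mp hz g
  refine le_antisymm ?_ ?_
  · rintro v ⟨hvc, hv⟩
    exact mem_zpowers_commutatorElement_of_commute (central hc x).symm (central hc y).symm
      hox hoy hv (central hvc x) (central hvc y)
  · exact Subgroup.zpowers_le.mpr ⟨hc, commutatorElement_mem_closure_pair x y⟩

end Commutator

lemma ker_mk'_comp_subtype_eq_zpowers {G : Type*} [Group G] {N H : Subgroup G} [N.Normal] {s : G}
    (hs : s ∈ H) (h : N ⊓ H = Subgroup.zpowers s) :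
    ((QuotientGroup.mk' N).comp H.subtype).ker = Subgroup.zpowers (⟨s, hs⟩ : H) := by
  rw [← MonoidHom.comap_ker, QuotientGroup.ker_mk']
  refine Subgroup.map_injective H.subtype_injective ?_
  rw [Subgroup.map_comap_eq, Subgroup.range_subtype, inf_comm, h, MonoidHom.map_zpowers]
  rfl

lemma orderOf_algebraMap {R A : Type*} [CommSemiring R] [Semiring A] [Algebra R A]
    [FaithfulSMul R A] (r : R) : orderOf (algebraMap R A r) = orderOf r :=
  orderOf_injective (algebraMap R A : R →* A) (FaithfulSMul.algebraMap_injective R A) r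

lemma diagonal_mul_permMatrixHom {m R : Type*} [Fintype m] [DecidableEq m] [NonAssocSemiring R]
    (d : m → R) (σ : Equiv.Perm m) :
    diagonal d * permMatrixHom σ = permMatrixHom σ * diagonal (d ∘ σ) := by
  ext i j
  rw [diagonal_mul, mul_diagonal]
  by_cases h : σ.symm i = j
  · simp [← h]
  · simp [PEquiv.toMatrix_apply, h]

section ClockAndShift

open scoped commutatorElement

variable {n : ℕ}

lemma isPrimitiveRoot_zetaC [NeZero n] : IsPrimitiveRoot (zetaC n) n :=
  Complex.isPrimitiveRoot_exp n (NeZero.ne n)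

lemma alphaM_eq_permMatrixHom [NeZero n] :
    alphaM n = permMatrixHom (Equiv.addRight (1 : Fin n)) := by
  ext i j
  simp [alphaM, PEquiv.toMatrix_apply, Fin.ext_iff, Fin.val_add, ← sub_eq_add_neg,
    sub_eq_iff_eq_add]

lemma alphaM_pow_self (n : ℕ) [NeZero n] : alphaM n ^ n = 1 := by
  have hn : n • (1 : Fin n) = 0 := by simpa using card_nsmul_eq_zero (x := (1 : Fin n))
  rw [alphaM_eq_permMatrixHom, ← map_pow, Equiv.nsmul_addRight, hn, Equiv.addRight_zero, map_one]

lemma betaM_pow_self (n : ℕ) [NeZero n] : betaM n ^ n = 1 := by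
  rw [betaM, diagonal_pow, ← diagonal_one]
  congr 1
  ext i
  simp [pow_right_comm _ _ n, isPrimitiveRoot_zetaC.pow_eq_one]

lemma zetaC_pow_val_add_one [NeZero n] (i : Fin n) :
    zetaC n ^ ((i + 1 : Fin n) : ℕ) = zetaC n ^ ((i : ℕ) + 1) := by
  simp [Fin.val_add, ← pow_eq_pow_mod _ isPrimitiveRoot_zetaC.pow_eq_one]

lemma betaM_mul_alphaM (n : ℕ) [NeZero n] :
    betaM n * alphaM n = zetaC n • (alphaM n * betaM n) := by
  rw [alphaM_eq_permMatrixHom, betaM, diagonal_mul_permMatrixHom, ← Matrix.mul_smul,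
    ← diagonal_smul]
  congr 2
  ext i
  simp [pow_succ', zetaC_pow_val_add_one]

variable (hA : alphaM n ∈ unitaryGroup (Fin n) ℂ) (hB : betaM n ∈ unitaryGroup (Fin n) ℂ)
  (hS : zetaC n • (1 : Matrix (Fin n) (Fin n) ℂ) ∈ unitaryGroup (Fin n) ℂ)

lemma orderOf_aU_dvd [NeZero n] : orderOf (aU n hA) ∣ n :=
  orderOf_dvd_of_pow_eq_one <| Subtype.ext <| alphaM_pow_self n

lemma orderOf_bU_dvd [NeZero n] : orderOf (bU n hB) ∣ n :=
  orderOf_dvd_of_pow_eq_one <| Subtype.ext <| betaM_pow_self n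

lemma orderOf_sU [NeZero n] : orderOf (sU n hS) = n := by
  calc orderOf (sU n hS)
      = orderOf (zetaC n • (1 : Matrix (Fin n) (Fin n) ℂ)) := (orderOf_submonoid _).symm
    _ = orderOf (zetaC n) := by rw [← Algebra.algebraMap_eq_smul_one, orderOf_algebraMap]
    _ = n := isPrimitiveRoot_zetaC.eq_orderOf.symm

lemma sU_mem_center : sU n hS ∈ Subgroup.center (unitaryGroup (Fin n) ℂ) :=
  Subgroup.mem_center_iff.mpr fun u => Subtype.ext <| by simp [sU]

lemma commutatorElement_bU_aU [NeZero n] : ⁅bU n hB, aU n hA⁆ = sU n hS := by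
  rw [commutatorElement_def, mul_inv_eq_iff_eq_mul, mul_inv_eq_iff_eq_mul]
  refine Subtype.ext ?_
  simpa [aU, bU, sU] using betaM_mul_alphaM n

lemma sU_mem_Vgrp [NeZero n] : sU n hS ∈ Vgrp n hA hB := by
  rw [← commutatorElement_bU_aU hA hB hS, Vgrp, Set.pair_comm]
  exact commutatorElement_mem_closure_pair _ _

theorem center_inf_Vgrp_eq_zpowers [NeZero n] :
    Subgroup.center (unitaryGroup (Fin n) ℂ) ⊓ Vgrp n hA hB = Subgroup.zpowers (sU n hS) := by
  have hcomm : ⁅bU n hB, aU n hA⁆ = sU n hS := commutatorElement_bU_aU hA hB hS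
  have horder : orderOf ⁅bU n hB, aU n hA⁆ = n := by rw [hcomm, orderOf_sU]
  rw [Vgrp, Set.pair_comm, ← hcomm]
  exact center_inf_closure_pair_eq_zpowers_commutatorElement (hcomm ▸ sU_mem_center hS)
    ((orderOf_bU_dvd hB).trans horder.symm.dvd) ((orderOf_aU_dvd hA).trans horder.symm.dvd)

end ClockAndShift

/-- the kernel of the restriction to `V_n'` of the quotient map
`U_n → PU_n = U_n/Z(U_n)` is the cyclic subgroup generated by the scalar matrix `ζ·I`,
which has order `n`; and the image of `V_n'` is `V_n`, the subgroup of `PU_n` generated by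
the images `α`, `β`.  This is the short exact sequence `1 → ℤ/n → V_n' → V_n → 1`. -/
theorem ker_restriction_eq_zpowers_scalar (n : ℕ) (hn : 1 < n)
    (hA : alphaM n ∈ Matrix.unitaryGroup (Fin n) ℂ)
    (hB : betaM n ∈ Matrix.unitaryGroup (Fin n) ℂ)
    (hS : zetaC n • (1 : Matrix (Fin n) (Fin n) ℂ) ∈ Matrix.unitaryGroup (Fin n) ℂ) :
    ∃ hsV : sU n hS ∈ Vgrp n hA hB,
      MonoidHom.ker
          ((QuotientGroup.mk' (Subgroup.center (Matrix.unitaryGroup (Fin n) ℂ))).comp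
            (Vgrp n hA hB).subtype) =
        Subgroup.zpowers (⟨sU n hS, hsV⟩ : Vgrp n hA hB) ∧
      orderOf (⟨sU n hS, hsV⟩ : Vgrp n hA hB) = n ∧
      Subgroup.map (QuotientGroup.mk' (Subgroup.center (Matrix.unitaryGroup (Fin n) ℂ)))
          (Vgrp n hA hB) =
        Subgroup.closure
          {QuotientGroup.mk' (Subgroup.center (Matrix.unitaryGroup (Fin n) ℂ)) (aU n hA),
           QuotientGroup.mk' (Subgroup.center (Matrix.unitaryGroup (Fin n) ℂ)) (bU n hB)} := by
  have : NeZero n := ⟨by omega⟩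
  have hsV : sU n hS ∈ Vgrp n hA hB := sU_mem_Vgrp hA hB hS
  refine ⟨hsV, ker_mk'_comp_subtype_eq_zpowers hsV (center_inf_Vgrp_eq_zpowers hA hB hS), ?_, ?_⟩
  · rw [Subgroup.orderOf_mk, orderOf_sU]
  · rw [Vgrp, MonoidHom.map_closure, Set.image_pair]
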